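/- Let X be a complete, 4-hyperconvex metric space and let A_1, ..., A_m be subsets of X, each externally 2-hyperconvex in X, such that A_i ∩ A_j is nonempty for all i, j. Then the intersection ⋂_{i=1}^m A_i is externally n-hyperconvex in X for every positive integer n. -/

import Mathlib

/-- A metric space `X` is `n`-hyperconvex if for every family of `n` closed balls
`B(x i, r i)` with `d(x i, x j) ≤ r i + r j`, the intersection is nonempty. -/
def IsNHyperconvex (X : Type*) [MetricSpace X] (n : ℕ) : Prop :=
  ∀ (x : Fin n → X) (r : Fin n → ℝ),
    (∀ i j, dist (x i) (x j) ≤ r i + r j) →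
    (⋂ i, Metric.closedBall (x i) (r i)).Nonempty

/-- A subset `A` of a metric space `X` is externally `n`-hyperconvex in `X` if for every
family of `n` closed balls `B(x i, r i)` with `d(x i, A) ≤ r i` and
`d(x i, x j) ≤ r i + r j`, the intersection `A ∩ ⋂ i, B(x i, r i)` is nonempty. -/
def IsExternallyNHyperconvex {X : Type*} [MetricSpace X] (A : Set X) (n : ℕ) : Prop :=
  ∀ (x : Fin n → X) (r : Fin n → ℝ),
    (∀ i, Metric.infDist (x i) A ≤ r i) →
    (∀ i j, dist (x i) (x j) ≤ r i + r j) →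
    (A ∩ ⋂ i, Metric.closedBall (x i) (r i)).Nonempty

/-!
If `A` and `B` are externally 2-hyperconvex and intersect, a point of `A` close to `B` can be moved,
by jumping back and forth between `A` and `B` while descending towards a suitable ball, to a nearby
pair of points of `A` and `B` that is twice as close. Completeness then yields a point of `A ∩ B`,
so the distance to `A ∩ B` is controlled linearly by the distance to `B` on `A`. The same zigzag,
descending towards a third set `C`, makes points of `A ∩ B` converge to `C`. This Helly property
for three sets is applied first with `C` a ball, then with `C` externally 2-hyperconvex (descent
towards `C` being the first case for a closed neighbourhood of `C`), and finally with `C` an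
intersection of two balls, which shows that `A ∩ B` is again externally 2-hyperconvex. Finite
families follow by induction, and the balls of the theorem are just further members of the family.
-/

open Metric Set Filter Topology

section PseudoMetric

variable {X : Type*} [PseudoMetricSpace X]

theorem infDist_le_infDist_add_of_forall {S C : Set X} {x : X} {t : ℝ} (hS : S.Nonempty)
    (hSC : ∀ z ∈ S, infDist z C ≤ t) : infDist x C ≤ infDist x S + t := by
  refine sub_le_iff_le_add.1 ((le_infDist hS).2 fun z hz => sub_le_iff_le_add'.2 ?_)
  exact infDist_le_infDist_add_dist.trans (by gcongr; exact hSC z hz)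

theorem dist_le_infDist_add_of_subset_closedBall {S : Set X} {x c : X} {r : ℝ} (hS : S.Nonempty)
    (hSc : S ⊆ closedBall c r) : dist x c ≤ infDist x S + r := by
  rw [← infDist_singleton]
  exact infDist_le_infDist_add_of_forall hS fun z hz => infDist_singleton.trans_le (hSc hz)

theorem mem_cthickening_iff_infDist_le {C : Set X} {x : X} {t : ℝ} (hC : C.Nonempty)
    (ht : 0 ≤ t) : x ∈ cthickening t C ↔ infDist x C ≤ t := by
  rw [mem_cthickening_iff, infDist, ENNReal.le_ofReal_iff_toReal_le (infEDist_ne_top hC) ht]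

theorem exists_mem_inter_of_halving_infDist [CompleteSpace X] {S T : Set X} (hS : IsClosed S)
    (hT : IsClosed T) (hTne : T.Nonempty) {K : ℝ}
    (halving : ∀ p ∈ S, ∀ δ > 0, infDist p T ≤ δ →
      ∃ p' ∈ S, infDist p' T ≤ δ / 2 ∧ dist p p' ≤ K * δ)
    {p : X} (hp : p ∈ S) {δ : ℝ} (hδ : 0 < δ) (hpT : infDist p T ≤ δ) :
    ∃ q ∈ S ∩ T, dist p q ≤ 2 * K * δ := by
  choose! move move_mem infDist_move dist_move using halving
  let u : ℕ → X := fun n => Nat.rec p (fun k q => move q (δ / 2 ^ k)) n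
  have hu : ∀ n, u n ∈ S ∧ infDist (u n) T ≤ δ / 2 ^ n := by
    intro n
    induction n with
    | zero => simpa [u] using And.intro hp hpT
    | succ n ih =>
      refine ⟨move_mem _ ih.1 _ (by positivity) ih.2, ?_⟩
      rw [pow_succ, ← div_div]
      exact infDist_move _ ih.1 _ (by positivity) ih.2
  have dist_succ : ∀ n, dist (u n) (u (n + 1)) ≤ 2 * K * δ / 2 / 2 ^ n := fun n =>
    (dist_move _ (hu n).1 _ (by positivity) (hu n).2).trans_eq (by ring)
  obtain ⟨q, hq⟩ := cauchySeq_tendsto_of_complete (cauchySeq_of_le_geometric_two dist_succ)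
  have radius_tendsto : Tendsto (fun n : ℕ => δ / 2 ^ n) atTop (𝓝 0) :=
    tendsto_const_nhds.div_atTop (tendsto_pow_atTop_atTop_of_one_lt one_lt_two)
  have infDist_q : infDist q T ≤ 0 :=
    le_of_tendsto_of_tendsto' ((continuous_infDist_pt T).tendsto q |>.comp hq) radius_tendsto
      fun n => (hu n).2
  exact ⟨q, ⟨hS.mem_of_tendsto hq (.of_forall fun n => (hu n).1),
    (hT.mem_iff_infDist_zero hTne).2 (infDist_q.antisymm infDist_nonneg)⟩,
    dist_le_of_le_geometric_two_of_tendsto₀ dist_succ hq⟩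

/-- Quantitative descent inside `A` towards `C`: a point within `ε` of `A` and within `t + ε` of
`C` can be moved by at most `ε` to a point of `A` within `t` of `C`. Since `infDist` to the empty
set is `0`, the notion is meant for nonempty `A` and `C`. -/
def DescendsTo (A C : Set X) : Prop :=
  ∀ ⦃t ε : ℝ⦄ ⦃p : X⦄, 0 ≤ t → 0 ≤ ε → infDist p C ≤ t + ε → infDist p A ≤ ε →
    ∃ a ∈ A, dist a p ≤ ε ∧ infDist a C ≤ t

theorem DescendsTo.exists_close_pair {C : Set X} (hC : IsClosed C) (hCne : C.Nonempty) {ε : ℝ}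
    (hε : 0 ≤ ε) (n : ℕ) : ∀ {A B : Set X}, DescendsTo A C → DescendsTo B C →
    ∀ a ∈ A, infDist a B ≤ ε → infDist a C ≤ n * ε →
    ∃ a' ∈ A ∩ C, ∃ b' ∈ B ∩ C, dist a' b' ≤ ε ∧ dist a' a ≤ 2 * n * ε := by
  have mem_C : ∀ {z}, infDist z C ≤ 0 → z ∈ C := fun hz =>
    (hC.mem_iff_infDist_zero hCne).2 (hz.antisymm infDist_nonneg)
  induction n with
  | zero =>
    intro A B _ hB a ha haB haC
    replace haC : infDist a C ≤ 0 := by simpa using haC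
    obtain ⟨b, hb, hba, hbC⟩ := hB le_rfl hε (haC.trans (by simpa using hε)) haB
    exact ⟨a, ⟨ha, mem_C haC⟩, b, ⟨hb, mem_C hbC⟩, by rwa [dist_comm], by simp⟩
  | succ n ih =>
    intro A B hA hB a ha haB haC
    obtain ⟨b, hb, hba, hbC⟩ :=
      hB (t := n * ε) (by positivity) hε (haC.trans_eq (by push_cast; ring)) haB
    have hbA : infDist b A ≤ ε := (infDist_le_dist_of_mem ha).trans hba
    obtain ⟨b', hb', a', ha', hb'a', hb'b⟩ := ih hB hA b hb hbA hbC
    refine ⟨a', ha', b', hb', by rwa [dist_comm], ?_⟩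
    calc dist a' a ≤ dist a' b' + dist b' b + dist b a := dist_triangle4 _ _ _ _
      _ ≤ ε + 2 * n * ε + ε := by gcongr; rwa [dist_comm]
      _ = 2 * (n + 1 : ℕ) * ε := by push_cast; ring

end PseudoMetric

section Metric

variable {X : Type*} [MetricSpace X]

namespace IsNHyperconvex

theorem anti {m n : ℕ} [NeZero m] (hX : IsNHyperconvex X n) (hmn : m ≤ n) :
    IsNHyperconvex X m := by
  intro x r hxx
  let wrap : Fin n → Fin m := fun i => Fin.ofNat m i
  obtain ⟨p, hp⟩ := hX (x ∘ wrap) (r ∘ wrap) fun i j => hxx _ _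
  refine ⟨p, mem_iInter.2 fun j => ?_⟩
  simpa [wrap] using mem_iInter.1 hp (Fin.castLE hmn j)

theorem inter_closedBall_nonempty (hX : IsNHyperconvex X 2) {x y : X} {r s : ℝ} (hr : 0 ≤ r)
    (hs : 0 ≤ s) (hxy : dist x y ≤ r + s) : (closedBall x r ∩ closedBall y s).Nonempty := by
  have hyx : dist y x ≤ s + r := by rwa [dist_comm, add_comm]
  obtain ⟨p, hp⟩ := hX ![x, y] ![r, s] (by simp [Fin.forall_fin_two, *])
  exact ⟨p, mem_iInter.1 hp 0, mem_iInter.1 hp 1⟩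

theorem infDist_cthickening_le_iff (hX : IsNHyperconvex X 2) {C : Set X} (hC : C.Nonempty)
    {x : X} {s t : ℝ} (hs : 0 ≤ s) (ht : 0 ≤ t) :
    infDist x (cthickening t C) ≤ s ↔ infDist x C ≤ s + t := by
  constructor <;> intro hx
  · have := infDist_le_infDist_add_of_forall (x := x) (hC.mono (self_subset_cthickening C))
      fun z hz => (mem_cthickening_iff_infDist_le hC ht).1 hz
    linarith
  · refine le_of_forall_pos_le_add fun ε hε => ?_
    obtain ⟨c, hc, hxc⟩ := (infDist_lt_iff hC).1 (hx.trans_lt (lt_add_of_pos_right _ hε))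
    obtain ⟨p, hpx, hpc⟩ := hX.inter_closedBall_nonempty (x := x) (y := c) (r := s + ε) (s := t)
      (by positivity) ht (by linarith)
    have hp : p ∈ cthickening t C := closedBall_subset_cthickening hc t hpc
    exact (infDist_le_dist_of_mem hp).trans (by rwa [dist_comm])

theorem infDist_closedBall_le_iff (hX : IsNHyperconvex X 2) {x c : X} {s r : ℝ} (hs : 0 ≤ s)
    (hr : 0 ≤ r) : infDist x (closedBall c r) ≤ s ↔ dist x c ≤ s + r := by
  rw [← cthickening_singleton c hr, hX.infDist_cthickening_le_iff (singleton_nonempty c) hs hr,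
    infDist_singleton]

theorem isExternallyNHyperconvex_iInter_closedBall {k l : ℕ} (hX : IsNHyperconvex X (k + l))
    {x : Fin k → X} {r : Fin k → ℝ} (hne : (⋂ i, closedBall (x i) (r i)).Nonempty) :
    IsExternallyNHyperconvex (⋂ i, closedBall (x i) (r i)) l := by
  intro y s hy hyy
  have hxx (i j) : dist (x i) (x j) ≤ r i + r j := by
    obtain ⟨z, hz⟩ := hne
    exact (dist_triangle_left _ _ z).trans
      (add_le_add (mem_iInter.1 hz i) (mem_iInter.1 hz j))
  have hyx (j i) : dist (y j) (x i) ≤ s j + r i :=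
    (dist_le_infDist_add_of_subset_closedBall hne (iInter_subset _ i)).trans (by gcongr; exact hy j)
  have hxy (i j) : dist (x i) (y j) ≤ r i + s j := by
    rw [dist_comm, add_comm]
    exact hyx j i
  obtain ⟨p, hp⟩ := hX (Fin.append x y) (Fin.append r s) fun i j => by
    cases i using Fin.addCases <;> cases j using Fin.addCases <;>
      simp only [Fin.append_left, Fin.append_right, hxx, hxy, hyx, hyy]
  refine ⟨p, mem_iInter.2 fun i => ?_, mem_iInter.2 fun j => ?_⟩
  · simpa using mem_iInter.1 hp (Fin.castAdd l i)
  · simpa using mem_iInter.1 hp (Fin.natAdd k j)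

theorem isExternallyNHyperconvex_closedBall {n : ℕ} (hX : IsNHyperconvex X (1 + n)) {c : X}
    {r : ℝ} (hr : 0 ≤ r) : IsExternallyNHyperconvex (closedBall c r) n := by
  have h := hX.isExternallyNHyperconvex_iInter_closedBall (x := fun _ => c) (r := fun _ => r)
    ⟨c, mem_iInter.2 fun _ => mem_closedBall_self hr⟩
  rwa [iInter_const] at h

end IsNHyperconvex

namespace IsExternallyNHyperconvex

variable {A B C : Set X} {n : ℕ}

theorem nonempty [Nonempty X] (hA : IsExternallyNHyperconvex A n) : A.Nonempty := by
  inhabit X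
  have hr : (0 : ℝ) ≤ infDist (default : X) A := infDist_nonneg
  exact (hA (fun _ => default) (fun _ => infDist default A) (fun _ => le_rfl)
    fun _ _ => by simpa using hr).mono inter_subset_left

theorem exists_dist_le [NeZero n] (hA : IsExternallyNHyperconvex A n) {x : X} {r : ℝ}
    (hx : infDist x A ≤ r) : ∃ a ∈ A, dist a x ≤ r := by
  have hr : 0 ≤ r := infDist_nonneg.trans hx
  obtain ⟨a, ha, hax⟩ := hA (fun _ => x) (fun _ => r) (fun _ => hx) fun _ _ => by simpa using hr
  exact ⟨a, ha, mem_iInter.1 hax 0⟩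

theorem isClosed [NeZero n] (hA : IsExternallyNHyperconvex A n) : IsClosed A := by
  refine isClosed_of_closure_subset fun x hx => ?_
  obtain ⟨a, ha, hax⟩ := hA.exists_dist_le (infDist_zero_of_mem_closure hx).le
  rwa [← dist_le_zero.1 hax]

theorem exists_dist_le_dist_le (hA : IsExternallyNHyperconvex A 2) {x y : X} {r s : ℝ}
    (hx : infDist x A ≤ r) (hy : infDist y A ≤ s) (hxy : dist x y ≤ r + s) :
    ∃ a ∈ A, dist a x ≤ r ∧ dist a y ≤ s := by
  have hr : 0 ≤ r := infDist_nonneg.trans hx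
  have hs : 0 ≤ s := infDist_nonneg.trans hy
  have hyx : dist y x ≤ s + r := by rwa [dist_comm, add_comm]
  obtain ⟨a, ha, hax⟩ := hA ![x, y] ![r, s] (by simp [Fin.forall_fin_two, *])
    (by simp [Fin.forall_fin_two, *])
  exact ⟨a, ha, mem_iInter.1 hax 0, mem_iInter.1 hax 1⟩

theorem cthickening [NeZero n] (hX : IsNHyperconvex X (1 + n))
    (hC : IsExternallyNHyperconvex C n) {t : ℝ} (ht : 0 ≤ t) :
    IsExternallyNHyperconvex (cthickening t C) n := by
  intro x r hx hxx
  have hX₂ : IsNHyperconvex X 2 := hX.anti (by have := NeZero.pos n; omega)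
  have hr i : 0 ≤ r i := infDist_nonneg.trans (hx i)
  have : Nonempty X := ⟨x 0⟩
  obtain ⟨c, hc, hcx⟩ := hC x (fun i => r i + t)
    (fun i => (hX₂.infDist_cthickening_le_iff hC.nonempty (hr i) ht).1 (hx i))
    (fun i j => (hxx i j).trans (by linarith))
  obtain ⟨p, hpc, hpx⟩ := hX.isExternallyNHyperconvex_closedBall (c := c) ht x r
    (fun i => (hX₂.infDist_closedBall_le_iff (hr i) ht).2 (mem_closedBall'.1 (mem_iInter.1 hcx i)))
    hxx
  exact ⟨p, closedBall_subset_cthickening hc t hpc, hpx⟩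

theorem descendsTo_closedBall (hX : IsNHyperconvex X 2) (hA : IsExternallyNHyperconvex A 2)
    {x : X} {r : ℝ} (hx : infDist x A ≤ r) : DescendsTo A (closedBall x r) := by
  intro t ε p ht hε hpx hpA
  have hr : 0 ≤ r := infDist_nonneg.trans hx
  have hpx' : dist p x ≤ ε + (t + r) :=
    ((hX.infDist_closedBall_le_iff (by positivity) hr).1 hpx).trans_eq (by ring)
  obtain ⟨a, ha, hap, hax⟩ := hA.exists_dist_le_dist_le hpA (by linarith) hpx'
  exact ⟨a, ha, hap, (hX.infDist_closedBall_le_iff ht hr).2 hax⟩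

section Complete

variable [CompleteSpace X]

theorem exists_mem_inter_dist_le (hX : IsNHyperconvex X 2) (hA : IsExternallyNHyperconvex A 2)
    (hB : IsExternallyNHyperconvex B 2) (hAB : (A ∩ B).Nonempty) {a : X} (ha : a ∈ A) {η : ℝ}
    (hη : 0 < η) (haB : infDist a B ≤ η) : ∃ p ∈ A ∩ B, dist a p ≤ 2 * η := by
  obtain ⟨z, hzA, hzB⟩ := hAB
  suffices halving : ∀ p ∈ A, ∀ δ > 0, infDist p B ≤ δ →
      ∃ p' ∈ A, infDist p' B ≤ δ / 2 ∧ dist p p' ≤ 1 * δ by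
    simpa using exists_mem_inter_of_halving_infDist hA.isClosed hB.isClosed ⟨z, hzB⟩ halving ha hη
      haB
  intro p hp δ hδ hpB
  have hpA : infDist p A ≤ δ := (infDist_zero_of_mem hp).trans_le hδ.le
  have hzB' : infDist z B ≤ δ / 2 := (infDist_zero_of_mem hzB).trans_le (by positivity)
  have p_mem : p ∈ closedBall p δ := mem_closedBall_self hδ.le
  obtain ⟨n, hn⟩ := exists_nat_ge (infDist z (closedBall p δ) / (δ / 2))
  -- The zigzag starts at the common point `z` and ends inside the ball, however far `z` is.
  obtain ⟨a', ⟨ha', ha'p⟩, b', ⟨hb', -⟩, ha'b', -⟩ :=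
    DescendsTo.exists_close_pair isClosed_closedBall ⟨p, p_mem⟩ (half_pos hδ).le n
      (hA.descendsTo_closedBall hX hpA) (hB.descendsTo_closedBall hX hpB) z hzA hzB'
      ((div_le_iff₀ (half_pos hδ)).1 hn)
  refine ⟨a', ha', (infDist_le_dist_of_mem hb').trans ha'b', ?_⟩
  rw [one_mul]
  exact mem_closedBall'.1 ha'p

theorem inter_inter_nonempty_of_descendsTo (hX : IsNHyperconvex X 2)
    (hA : IsExternallyNHyperconvex A 2) (hB : IsExternallyNHyperconvex B 2)
    (hAB : (A ∩ B).Nonempty) (hC : IsClosed C) (hCne : C.Nonempty) (hAC : DescendsTo A C)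
    (hBC : DescendsTo B C) : (A ∩ B ∩ C).Nonempty := by
  suffices halving : ∀ p ∈ A ∩ B, ∀ δ > 0, infDist p C ≤ δ →
      ∃ p' ∈ A ∩ B, infDist p' C ≤ δ / 2 ∧ dist p p' ≤ 5 / 2 * δ by
    obtain ⟨z, hz⟩ := hAB
    obtain ⟨q, hq, -⟩ := exists_mem_inter_of_halving_infDist (hA.isClosed.inter hB.isClosed) hC hCne
      halving hz (add_pos_of_nonneg_of_pos infDist_nonneg one_pos)
      (le_add_of_nonneg_right zero_le_one)
    exact ⟨q, hq⟩
  intro p hp δ hδ hpC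
  have hpB : infDist p B ≤ δ / 4 := (infDist_zero_of_mem hp.2).trans_le (by positivity)
  obtain ⟨a, ⟨ha, haC⟩, b, ⟨hb, -⟩, hab, hap⟩ :=
    DescendsTo.exists_close_pair hC hCne (by positivity) 4 hAC hBC p hp.1 hpB
      (by push_cast; linarith)
  obtain ⟨p', hp', hap'⟩ := hA.exists_mem_inter_dist_le hX hB hAB ha (by positivity)
    ((infDist_le_dist_of_mem hb).trans hab)
  refine ⟨p', hp', ?_, ?_⟩
  · calc infDist p' C ≤ dist p' a := infDist_le_dist_of_mem haC
      _ ≤ δ / 2 := by rw [dist_comm]; linarith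
  · calc dist p p' ≤ dist a p + dist a p' := dist_triangle_left _ _ _
      _ ≤ 5 / 2 * δ := by push_cast at hap; linarith

theorem inter_inter_closedBall_nonempty (hX : IsNHyperconvex X 2)
    (hA : IsExternallyNHyperconvex A 2) (hB : IsExternallyNHyperconvex B 2)
    (hAB : (A ∩ B).Nonempty) {x : X} {r : ℝ} (hxA : infDist x A ≤ r) (hxB : infDist x B ≤ r) :
    (A ∩ B ∩ closedBall x r).Nonempty :=
  hA.inter_inter_nonempty_of_descendsTo hX hB hAB isClosed_closedBall
    ⟨x, mem_closedBall_self (infDist_nonneg.trans hxA)⟩ (hA.descendsTo_closedBall hX hxA)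
    (hB.descendsTo_closedBall hX hxB)

theorem descendsTo (hX : IsNHyperconvex X 3) (hA : IsExternallyNHyperconvex A 2)
    (hC : IsExternallyNHyperconvex C 2) (hAC : (A ∩ C).Nonempty) : DescendsTo A C := by
  intro t ε p ht hε hpC hpA
  have hX₂ : IsNHyperconvex X 2 := hX.anti (by norm_num)
  have hpC' : infDist p (Metric.cthickening t C) ≤ ε :=
    (hX₂.infDist_cthickening_le_iff hAC.right hε ht).2 (by rwa [add_comm])
  obtain ⟨a, ⟨ha, haC⟩, hap⟩ := hA.inter_inter_closedBall_nonempty hX₂ (hC.cthickening hX ht)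
    (hAC.mono (inter_subset_inter_right A (self_subset_cthickening C))) hpA hpC'
  exact ⟨a, ha, hap, (mem_cthickening_iff_infDist_le hAC.right ht).1 haC⟩

theorem inter_inter_nonempty (hX : IsNHyperconvex X 3) (hA : IsExternallyNHyperconvex A 2)
    (hB : IsExternallyNHyperconvex B 2) (hC : IsExternallyNHyperconvex C 2)
    (hAB : (A ∩ B).Nonempty) (hAC : (A ∩ C).Nonempty) (hBC : (B ∩ C).Nonempty) :
    (A ∩ B ∩ C).Nonempty :=
  hA.inter_inter_nonempty_of_descendsTo (hX.anti (by norm_num)) hB hAB hC.isClosed hAC.right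
    (hA.descendsTo hX hC hAC) (hB.descendsTo hX hC hBC)

theorem inter (hX : IsNHyperconvex X 4) (hA : IsExternallyNHyperconvex A 2)
    (hB : IsExternallyNHyperconvex B 2) (hAB : (A ∩ B).Nonempty) :
    IsExternallyNHyperconvex (A ∩ B) 2 := by
  intro x r hx hxx
  have hAballs := hA x r
    (fun i => (infDist_le_infDist_of_subset inter_subset_left hAB).trans (hx i)) hxx
  have hBballs := hB x r
    (fun i => (infDist_le_infDist_of_subset inter_subset_right hAB).trans (hx i)) hxx
  exact hA.inter_inter_nonempty (hX.anti (by norm_num)) hB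
    (IsNHyperconvex.isExternallyNHyperconvex_iInter_closedBall hX hAballs.right) hAB hAballs
    hBballs

theorem biInter_nonempty (hX : IsNHyperconvex X 4) {ι : Type*} {s : Finset ι} (hs : s.Nonempty)
    {A : ι → Set X} (hA : ∀ i ∈ s, IsExternallyNHyperconvex (A i) 2)
    (hpair : ∀ i ∈ s, ∀ j ∈ s, (A i ∩ A j).Nonempty) : (⋂ i ∈ s, A i).Nonempty := by
  induction hs using Finset.Nonempty.cons_induction generalizing A with
  | singleton i => simpa using hpair i (by simp) i (by simp)
  | cons i s hi hs ih =>
    simp only [Finset.forall_mem_cons] at hA hpair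
    obtain ⟨hAi, hA⟩ := hA
    obtain ⟨⟨-, hpair_i⟩, hpair⟩ := hpair
    have inter_nonempty : (⋂ j ∈ s, A i ∩ A j).Nonempty := by
      refine ih (fun j hj => hAi.inter hX (hA j hj) (hpair_i j hj)) fun j hj k hk => ?_
      rw [← inter_inter_distrib_left, ← inter_assoc]
      exact hAi.inter_inter_nonempty (hX.anti (by norm_num)) (hA j hj) (hA k hk)
        (hpair_i j hj) (hpair_i k hk) ((hpair j hj).2 k hk)
    simpa only [Finset.mem_cons, Finset.mem_coe, iInter_iInter_eq_or_left] using
      inter_nonempty.mono (inter_biInter (Finset.coe_nonempty.2 hs) A (A i)).subset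

theorem iInter_nonempty (hX : IsNHyperconvex X 4) {ι : Type*} [Finite ι] [Nonempty ι]
    {A : ι → Set X} (hA : ∀ i, IsExternallyNHyperconvex (A i) 2)
    (hpair : ∀ i j, (A i ∩ A j).Nonempty) : (⋂ i, A i).Nonempty := by
  have := Fintype.ofFinite ι
  simpa using biInter_nonempty hX Finset.univ_nonempty (fun i _ => hA i) fun i _ j _ => hpair i j

end Complete

end IsExternallyNHyperconvex

end Metric

theorem inter_pairwise_intersecting_externally_two_hyperconvex
    (X : Type*) [MetricSpace X] [CompleteSpace X] (hX : IsNHyperconvex X 4)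
    (m : ℕ) (A : Fin m → Set X)
    (hA : ∀ i, IsExternallyNHyperconvex (A i) 2)
    (hpair : ∀ i j, (A i ∩ A j).Nonempty) :
    ∀ n : ℕ, 0 < n → IsExternallyNHyperconvex (⋂ i, A i) n := by
  intro n hn x r hxA hxx
  have : NeZero n := ⟨hn.ne'⟩
  have hr i : 0 ≤ r i := infDist_nonneg.trans (hxA i)
  have hX₂ : IsNHyperconvex X 2 := hX.anti (by norm_num)
  have hX₃ : IsNHyperconvex X (1 + 2) := hX.anti (by norm_num)
  have hball j : IsExternallyNHyperconvex (closedBall (x j) (r j)) 2 :=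
    hX₃.isExternallyNHyperconvex_closedBall (hr j)
  have hAball i j : (A i ∩ closedBall (x j) (r j)).Nonempty := by
    have : Nonempty (Fin m) := ⟨i⟩
    have hne : (⋂ i, A i).Nonempty := IsExternallyNHyperconvex.iInter_nonempty hX hA hpair
    exact (hA i).exists_dist_le
      ((infDist_le_infDist_of_subset (iInter_subset A i) hne).trans (hxA j))
  have hballs i j : (closedBall (x i) (r i) ∩ closedBall (x j) (r j)).Nonempty :=
    hX₂.inter_closedBall_nonempty (hr i) (hr j) (hxx i j)
  have family_inter := IsExternallyNHyperconvex.iInter_nonempty hX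
    (A := Sum.elim A fun j => closedBall (x j) (r j))
    (Sum.forall.2 ⟨hA, hball⟩) (by
      rintro (i | i) (j | j)
      exacts [hpair i j, hAball i j, inter_comm (A j) _ ▸ hAball j i, hballs i j])
  rwa [iInter_sum] at family_inter
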